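/- Asymptotics of the s-perimeter as s → 0⁺: let Ω ⊆ ℝⁿ be a bounded open set with finite classical perimeter, and let E₀ ⊆ ℝⁿ \ Ω. Then limsup_{s→0⁺} s · P_s(E₀, Ω) = ᾱ(E₀) · |Ω|. -/

import Mathlib

open MeasureTheory Filter Metric Topology

/-- The weighted tail integral `∫_{ℝⁿ \ B_r(q)} χ_E(y) / |q - y|^{n+s} dy`. -/
noncomputable def tailIntegral (n : ℕ) (E : Set (EuclideanSpace ℝ (Fin n))) (s : ℝ)
    (q : EuclideanSpace ℝ (Fin n)) (r : ℝ) : ℝ :=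
  ∫ y in (ball q r)ᶜ, E.indicator (fun _ => (1 : ℝ)) y / ‖q - y‖ ^ ((n : ℝ) + s)

/-- `ᾱ(E)`, the limsup as `s → 0⁺` of `s ∫_{ℝⁿ \ B₁} χ_E(y)/|y|^{n+s} dy`. -/
noncomputable def alphaBar (n : ℕ) (E : Set (EuclideanSpace ℝ (Fin n))) : ℝ :=
  limsup (fun s : ℝ => s * tailIntegral n E s 0 1) (𝓝[>] (0 : ℝ))

/-- Since `E₀ ∩ Ω = ∅`, the fractional perimeter of `E₀` in `Ω` reduces to
`P_s(E₀, Ω) = ∫_Ω ∫_{E₀} |x − y|^{−n−s} dy dx`. -/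
noncomputable def fracPerimeterExt (n : ℕ) (E₀ Ω : Set (EuclideanSpace ℝ (Fin n)))
    (s : ℝ) : ℝ :=
  ∫ x in Ω, ∫ y in E₀, 1 / ‖x - y‖ ^ ((n : ℝ) + s)

/-- The divergence of a vector field, `div X x = trace (DX(x))`. -/
noncomputable def divergence (n : ℕ)
    (X : EuclideanSpace ℝ (Fin n) → EuclideanSpace ℝ (Fin n))
    (x : EuclideanSpace ℝ (Fin n)) : ℝ :=
  LinearMap.trace ℝ (EuclideanSpace ℝ (Fin n)) (fderiv ℝ X x : _ →ₗ[ℝ] _)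

/-- `Ω` has finite classical perimeter (De Giorgi / distributional definition). -/
def HasFinitePerimeter (n : ℕ) (Ω : Set (EuclideanSpace ℝ (Fin n))) : Prop :=
  ∃ P : ℝ, ∀ X : EuclideanSpace ℝ (Fin n) → EuclideanSpace ℝ (Fin n),
    ContDiff ℝ 1 X → HasCompactSupport X → (∀ x, ‖X x‖ ≤ 1) →
    (∫ x in Ω, divergence n X x) ≤ P


lemma fpa_smooth (n : ℕ) (Ω : Set (EuclideanSpace ℝ (Fin n)))
    (hΩb : Bornology.IsBounded Ω) (P : ℝ)
    (hP : ∀ X : EuclideanSpace ℝ (Fin n) → EuclideanSpace ℝ (Fin n),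
      ContDiff ℝ 1 X → HasCompactSupport X → (∀ x, ‖X x‖ ≤ 1) →
      (∫ x in Ω, divergence n X x) ≤ P)
    (φ : EuclideanSpace ℝ (Fin n) → ℝ) (hφ : ContDiff ℝ 1 φ) (hc : HasCompactSupport φ)
    (h1 : ∀ x, |φ x| ≤ 1) (h : EuclideanSpace ℝ (Fin n)) :
    (∫ x in Ω, φ (x + h)) - ∫ x in Ω, φ x ≤ P * ‖h‖ := by
  by_cases hh : h = 0
  · simp [hh]
  have hn : 0 < ‖h‖ := norm_pos_iff.mpr hh
  have hfin : IsFiniteMeasure (volume.restrict Ω) := by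
    constructor
    simpa using hΩb.measure_lt_top
  obtain ⟨C, hC⟩ := (hc.fderiv (𝕜 := ℝ)).exists_bound_of_continuous (hφ.continuous_fderiv one_ne_zero)
  have hder : ∀ t : ℝ, HasDerivAt (fun t : ℝ => ∫ x in Ω, φ (x + t • h))
      (∫ x in Ω, fderiv ℝ φ (x + t • h) h) t := by
    intro t
    refine (hasDerivAt_integral_of_dominated_loc_of_deriv_le (μ := volume.restrict Ω)
      (F := fun (t : ℝ) x => φ (x + t • h)) (F' := fun (t : ℝ) x => fderiv ℝ φ (x + t • h) h)
      (bound := fun _ => C * ‖h‖) (s := Set.univ) Filter.univ_mem ?_ ?_ ?_ ?_ ?_ ?_).2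
    · refine Filter.Eventually.of_forall fun t => ?_
      exact (hφ.continuous.comp (by fun_prop)).aestronglyMeasurable
    · refine Integrable.of_bound ((hφ.continuous.comp (by fun_prop)).aestronglyMeasurable) 1 ?_
      exact Filter.Eventually.of_forall fun x => h1 _
    · have : Continuous fun x => fderiv ℝ φ (x + t • h) h :=
        ((hφ.continuous_fderiv one_ne_zero).comp (by fun_prop : Continuous fun x => x + t • h)).clm_apply continuous_const
      exact this.aestronglyMeasurable
    · refine Filter.Eventually.of_forall fun x t _ => ?_
      exact (ContinuousLinearMap.le_opNorm _ _).trans (mul_le_mul_of_nonneg_right (hC _) (norm_nonneg _))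
    · exact integrable_const _
    · refine Filter.Eventually.of_forall fun x t _ => ?_
      have hd : HasFDerivAt φ (fderiv ℝ φ (x + t • h)) (x + t • h) :=
        (hφ.differentiable one_ne_zero _).hasFDerivAt
      have hl : HasDerivAt (fun t : ℝ => x + t • h) h t := by
        simpa using ((hasDerivAt_id t).smul_const h).const_add x
      exact hd.comp_hasDerivAt t hl
  have hle : ∀ t : ℝ, (∫ x in Ω, fderiv ℝ φ (x + t • h) h) ≤ P * ‖h‖ := by
    intro t
    have hX := hP (fun x => φ (x + t • h) • (‖h‖⁻¹ • h)) ?_ ?_ ?_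
    · have hdiv : ∀ x, divergence n (fun x => φ (x + t • h) • (‖h‖⁻¹ • h)) x
          = ‖h‖⁻¹ * fderiv ℝ φ (x + t • h) h := by
        intro x
        have hd : HasFDerivAt φ (fderiv ℝ φ (x + t • h)) (x + t • h) :=
          (hφ.differentiable one_ne_zero _).hasFDerivAt
        have h2 : HasFDerivAt (fun x => φ (x + t • h)) (fderiv ℝ φ (x + t • h)) x := by
          simpa using! hd.comp x ((hasFDerivAt_id x).add_const (t • h))
        have h3 := h2.smul_const (‖h‖⁻¹ • h)
        unfold divergence
        rw [h3.fderiv]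
        have : ((ContinuousLinearMap.smulRight (fderiv ℝ φ (x + t • h)) (‖h‖⁻¹ • h) :
          EuclideanSpace ℝ (Fin n) →L[ℝ] EuclideanSpace ℝ (Fin n)) : EuclideanSpace ℝ (Fin n) →ₗ[ℝ] EuclideanSpace ℝ (Fin n))
          = LinearMap.smulRight (fderiv ℝ φ (x + t • h) : EuclideanSpace ℝ (Fin n) →ₗ[ℝ] ℝ) (‖h‖⁻¹ • h) := rfl
        rw [this, LinearMap.trace_smulRight]
        simp
      simp_rw [hdiv] at hX
      rw [integral_const_mul, inv_mul_le_iff₀ hn] at hX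
      linarith
    · exact (hφ.comp (by fun_prop : ContDiff ℝ 1 fun x => x + t • h)).smul contDiff_const
    · have : HasCompactSupport fun x => φ (x + t • h) :=
        hc.comp_homeomorph (Homeomorph.addRight (t • h))
      exact this.smul_right
    · intro x
      rw [norm_smul, norm_smul, norm_inv, norm_norm, inv_mul_cancel₀ hn.ne', mul_one]
      exact h1 _
  have hmv := image_sub_le_mul_sub_of_deriv_le (f := fun t : ℝ => ∫ x in Ω, φ (x + t • h))
    (fun t => (hder t).differentiableAt) (C := P * ‖h‖) (fun t => by rw [(hder t).deriv]; exact hle t)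
    (show (0:ℝ) ≤ 1 by norm_num)
  simpa using hmv

lemma fpa_set (n : ℕ) (Ω : Set (EuclideanSpace ℝ (Fin n)))
    (hΩo : IsOpen Ω) (hΩb : Bornology.IsBounded Ω) (P : ℝ)
    (hP : ∀ X : EuclideanSpace ℝ (Fin n) → EuclideanSpace ℝ (Fin n),
      ContDiff ℝ 1 X → HasCompactSupport X → (∀ x, ‖X x‖ ≤ 1) →
      (∫ x in Ω, divergence n X x) ≤ P)
    (h : EuclideanSpace ℝ (Fin n)) :
    volume {x | x ∈ Ω ∧ x + h ∉ Ω} ≤ ENNReal.ofReal (P * ‖h‖) := by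
  set A := {x | x ∈ Ω ∧ x + h ∉ Ω} with hA
  have hAm : MeasurableSet A := by
    refine hΩo.measurableSet.inter ?_
    exact (hΩo.measurableSet.preimage (measurable_add_const h)).compl
  have hAΩ : A ⊆ Ω := fun x hx => hx.1
  have hΩfin : volume Ω ≠ ⊤ := hΩb.measure_lt_top.ne
  have hAfin : volume A ≠ ⊤ := (hΩb.subset hAΩ).measure_lt_top.ne
  have hfin : IsFiniteMeasure (volume.restrict Ω) := by
    constructor
    simpa using hΩb.measure_lt_top
  have hP0 : 0 ≤ P := by
    have := hP (fun _ => 0) contDiff_const (by simpa using! HasCompactSupport.zero) (by simp)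
    simpa [divergence] using this
  have key : ∀ ε : ℝ, 0 < ε → volume.real A ≤ P * ‖h‖ + 2 * ε := by
    intro ε hε
    have hε' : ENNReal.ofReal ε ≠ 0 := by simpa using hε
    obtain ⟨K, hKA, hKc, hKm⟩ := hAm.exists_isCompact_lt_add hAfin hε'
    set K' := Set.image (fun x => x + h) K with hK'
    have hK'c : IsCompact K' := hKc.image (by fun_prop)
    have hK'd : ∀ x ∈ K', x ∉ Ω := by
      rintro _ ⟨x, hx, rfl⟩
      exact (hKA hx).2
    obtain ⟨U, hUK, hUo, hUf, hUε⟩ := hK'c.measurableSet.exists_isOpen_sdiff_lt (μ := volume) hK'c.measure_lt_top.ne hε'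
    obtain ⟨r, hr⟩ := hK'c.isBounded.subset_ball 0
    obtain ⟨φ, hφ, hφr, hφ0, hφ1⟩ := exists_contMDiff_zero_iff_one_iff_of_isClosed
      (n := (1 : ℕ∞)) (modelWithCornersSelf ℝ (EuclideanSpace ℝ (Fin n)))
      (hUo.inter (isOpen_ball : IsOpen (ball (0 : EuclideanSpace ℝ (Fin n)) r))).isClosed_compl hK'c.isClosed
      (by
        rw [Set.disjoint_left]
        intro x hx hx'
        exact hx ⟨hUK hx', hr hx'⟩)
    have hφd : ContDiff ℝ 1 φ := hφ.contDiff
    have hφ01 : ∀ x, 0 ≤ φ x ∧ φ x ≤ 1 := fun x => hφr ⟨x, rfl⟩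
    have hφz : ∀ x, x ∉ U → φ x = 0 := fun x hx => (hφ0 x).1 (fun h' => hx h'.1)
    have hφc : HasCompactSupport φ := by
      refine HasCompactSupport.of_support_subset_isCompact (isCompact_closedBall (0 : EuclideanSpace ℝ (Fin n)) r) ?_
      intro x hx
      by_contra hx'
      exact hx ((hφ0 x).1 fun h' => hx' (ball_subset_closedBall h'.2))
    have hs := fpa_smooth n Ω hΩb P hP φ hφd hφc
      (fun x => abs_le.2 ⟨by linarith [(hφ01 x).1], (hφ01 x).2⟩) h
    have i1 : volume.real K ≤ ∫ x in Ω, φ (x + h) := by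
      have : volume.real K = ∫ x in Ω, K.indicator (fun _ => (1:ℝ)) x := by
        rw [integral_indicator hKc.measurableSet, Measure.restrict_restrict hKc.measurableSet,
          Set.inter_eq_left.2 (hKA.trans hAΩ)]
        simp
      rw [this]
      refine integral_mono ?_ ?_ ?_
      · exact (integrable_const _).indicator hKc.measurableSet
      · refine Integrable.of_bound ((hφd.continuous.comp (by fun_prop)).aestronglyMeasurable) 1 ?_
        refine Filter.Eventually.of_forall fun x => ?_
        rw [Real.norm_eq_abs, abs_of_nonneg (hφ01 _).1]
        exact (hφ01 _).2
      · intro x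
        by_cases hx : x ∈ K
        · have : φ (x + h) = 1 := (hφ1 _).1 ⟨x, hx, rfl⟩
          simp [hx, this]
        · simp [hx, (hφ01 (x + h)).1]
    have hUm : MeasurableSet (U \ K') := hUo.measurableSet.diff hK'c.measurableSet
    have i2 : ∫ x in Ω, φ x ≤ ε := by
      have : ∫ x in Ω, φ x ≤ ∫ x in Ω, (U \ K').indicator (fun _ => (1:ℝ)) x := by
        refine setIntegral_mono_on ?_ ?_ hΩo.measurableSet ?_
        · refine Integrable.of_bound (hφd.continuous.aestronglyMeasurable) 1 ?_
          refine Filter.Eventually.of_forall fun x => ?_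
          rw [Real.norm_eq_abs, abs_of_nonneg (hφ01 _).1]
          exact (hφ01 _).2
        · exact (integrable_const _).indicator hUm
        · intro x hx
          by_cases hxU : x ∈ U
          · have : x ∈ U \ K' := ⟨hxU, fun h' => hK'd x h' hx⟩
            simp [this, (hφ01 x).2]
          · simp [hφz x hxU, hxU]
      refine this.trans ?_
      rw [integral_indicator hUm, Measure.restrict_restrict hUm]
      have h3 : volume ((U \ K') ∩ Ω) ≤ ENNReal.ofReal ε :=
        (measure_mono Set.inter_subset_left).trans hUε.le
      simp only [integral_const, smul_eq_mul, mul_one, measureReal_restrict_apply_univ]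
      exact ENNReal.toReal_le_of_le_ofReal hε.le h3
    have i3 : volume.real A ≤ volume.real K + ε := by
      have := ENNReal.toReal_mono (by simp [hKc.measure_lt_top.ne]) hKm.le
      rw [ENNReal.toReal_add hKc.measure_lt_top.ne (by simp), ENNReal.toReal_ofReal hε.le] at this
      exact this
    linarith
  have hfinal : volume.real A ≤ P * ‖h‖ := by
    refine le_of_forall_pos_le_add fun ε hε => ?_
    have := key (ε / 2) (by linarith)
    linarith
  rw [← ENNReal.ofReal_toReal hAfin]
  exact ENNReal.ofReal_le_ofReal hfinal

lemma fpa_limsup (u v : ℝ → ℝ) (c B D : ℝ) (hc : 0 ≤ c)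
    (hu0 : ∀ s ∈ Set.Ioo (0:ℝ) (1/2), 0 ≤ s * u s) (hu : ∀ s ∈ Set.Ioo (0:ℝ) (1/2), s * u s ≤ B)
    (hd : ∀ s ∈ Set.Ioo (0:ℝ) (1/2), |v s - u s * c| ≤ D) :
    limsup (fun s : ℝ => s * v s) (𝓝[>] (0 : ℝ)) = limsup (fun s : ℝ => s * u s) (𝓝[>] (0 : ℝ)) * c := by
  have hev : ∀ᶠ s in 𝓝[>] (0:ℝ), s ∈ Set.Ioo (0:ℝ) (1/2) := Ioo_mem_nhdsGT (by norm_num)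
  have hba : IsBoundedUnder (· ≤ ·) (𝓝[>] (0:ℝ)) (fun s => s * u s) :=
    ⟨B, by simpa using! hev.mono hu⟩
  have hbb : IsBoundedUnder (· ≥ ·) (𝓝[>] (0:ℝ)) (fun s => s * u s) :=
    ⟨0, by simpa using! hev.mono hu0⟩
  have h1 : limsup (fun s : ℝ => s * u s) (𝓝[>] (0 : ℝ)) * c
      = limsup (fun s : ℝ => s * u s * c) (𝓝[>] (0 : ℝ)) :=
    Monotone.map_limsup_of_continuousAt (f := fun x => x * c) 
      (fun a b hab => mul_le_mul_of_nonneg_right hab hc) _ (by fun_prop) hba hbb.isCoboundedUnder_le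
  rw [h1]
  have ht : Tendsto (fun s : ℝ => s * (v s - u s * c)) (𝓝[>] (0:ℝ)) (𝓝 0) := by
    have h0 : Tendsto (fun s : ℝ => s * D) (𝓝[>] (0:ℝ)) (𝓝 0) := by
      have : Tendsto (fun s : ℝ => s * D) (𝓝 (0:ℝ)) (𝓝 (0 * D)) := by
        exact (continuous_id.mul continuous_const).tendsto 0
      rw [zero_mul] at this
      exact this.mono_left nhdsWithin_le_nhds
    refine squeeze_zero_norm' (hev.mono fun s hs => ?_) h0
    rw [norm_mul, Real.norm_eq_abs, Real.norm_eq_abs, abs_of_pos hs.1]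
    exact mul_le_mul_of_nonneg_left (hd s hs) hs.1.le
  have hca : IsBoundedUnder (· ≤ ·) (𝓝[>] (0:ℝ)) (fun s => s * u s * c) :=
    ⟨B * c, by simpa using! hev.mono fun s hs => mul_le_mul_of_nonneg_right (hu s hs) hc⟩
  have hcb : IsBoundedUnder (· ≥ ·) (𝓝[>] (0:ℝ)) (fun s => s * u s * c) :=
    ⟨0, by simpa using! hev.mono fun s hs => mul_nonneg (hu0 s hs) hc⟩
  have e : (fun s : ℝ => s * v s) = (fun s => s * u s * c) + fun s => s * (v s - u s * c) := by
    ext s; simp only [Pi.add_apply]; ring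
  rw [e]
  apply le_antisymm
  · have := limsup_add_le hcb hca ht.isBoundedUnder_ge.isCoboundedUnder_le ht.isBoundedUnder_le
    rwa [ht.limsup_eq, add_zero] at this
  · have := le_limsup_add hca hcb.isCoboundedUnder_le ht.isBoundedUnder_le ht.isBoundedUnder_ge
    rwa [ht.liminf_eq, add_zero] at this

lemma fpa_mvt (p a b m : ℝ) (hp : 0 ≤ p) (hm : 0 < m) (ha : m ≤ a) (hb : m ≤ b) :
    |a ^ (-p) - b ^ (-p)| ≤ p * m ^ (-p - 1) * |a - b| := by
  have := Convex.norm_image_sub_le_of_norm_hasDerivWithin_le (f := fun x : ℝ => x ^ (-p))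
    (f' := fun x => -p * x ^ (-p - 1)) (s := Set.Ici m) (C := p * m ^ (-p - 1)) (x := b) (y := a)
    (fun x hx => (Real.hasDerivAt_rpow_const (Or.inl (hm.trans_le hx).ne')).hasDerivWithinAt)
    (fun x hx => by
      have hx0 : 0 < x := hm.trans_le hx
      rw [norm_mul, Real.norm_eq_abs, Real.norm_eq_abs, abs_neg, abs_of_nonneg hp,
        abs_of_pos (Real.rpow_pos_of_pos hx0 _)]
      exact mul_le_mul_of_nonneg_left (Real.rpow_le_rpow_of_nonpos hm hx (by linarith)) hp)
    (convex_Ici m) hb ha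
  simpa using this

lemma fpa_pt {E : Type*} [NormedAddCommGroup E] (n : ℕ) (M : ℝ) (hM : 0 ≤ M) :
    ∃ C : ℝ, 0 ≤ C ∧ ∀ s ∈ Set.Ioo (0:ℝ) (1/2), ∀ x y : E, ‖x‖ ≤ M →
      |1 / ‖x - y‖ ^ ((n:ℝ) + s) - (ball (0:E) 1)ᶜ.indicator (fun y => 1 / ‖y‖ ^ ((n:ℝ) + s)) y|
      ≤ (ball (0:E) 1).indicator (fun h => ‖h‖ ^ (-((n:ℝ) + 1/2))) (x - y)
        + C * (1 + ‖y‖) ^ (-((n:ℝ) + 1)) := by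
  refine ⟨(2 + 2 * M) ^ ((n:ℝ)+1) + ((n:ℝ)+1) * M * 4 ^ ((n:ℝ)+2), by positivity, ?_⟩
  rintro s ⟨hs0, hs1⟩ x y hx
  have hn0 : (0:ℝ) ≤ n := n.cast_nonneg
  have hy0 := norm_nonneg y
  have hk0 : 0 ≤ (ball (0:E) 1).indicator (fun h => ‖h‖ ^ (-((n:ℝ) + 1/2))) (x - y) :=
    Set.indicator_nonneg (fun h _ => by positivity) _
  rw [add_mul]
  have t1 : 0 ≤ (2 + 2 * M) ^ ((n:ℝ)+1) * (1 + ‖y‖) ^ (-((n:ℝ) + 1)) := by positivity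
  have t2 : 0 ≤ ((n:ℝ)+1) * M * 4 ^ ((n:ℝ)+2) * (1 + ‖y‖) ^ (-((n:ℝ) + 1)) := by positivity
  by_cases hy : ‖y‖ < 2 * M + 1
  · have hone : 1 ≤ (2 + 2 * M) ^ ((n:ℝ)+1) * (1 + ‖y‖) ^ (-((n:ℝ) + 1)) := by
      rw [Real.rpow_neg (by positivity), ← div_eq_mul_inv, one_le_div (by positivity)]
      exact Real.rpow_le_rpow (by positivity) (by linarith) (by positivity)
    have ha0 : 0 ≤ 1 / ‖x - y‖ ^ ((n:ℝ) + s) := by positivity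
    have ha : 1 / ‖x - y‖ ^ ((n:ℝ) + s) ≤
        (ball (0:E) 1).indicator (fun h => ‖h‖ ^ (-((n:ℝ) + 1/2))) (x - y) + 1 := by
      by_cases h1 : ‖x - y‖ < 1
      · have hmem : x - y ∈ ball (0:E) 1 := by simpa using h1
        rw [Set.indicator_of_mem hmem, one_div, ← Real.rpow_neg (norm_nonneg _)]
        rcases (norm_nonneg (x - y)).eq_or_lt with h0 | h0
        · rw [← h0, Real.zero_rpow (by linarith), Real.zero_rpow (by linarith)]; norm_num
        · have := Real.rpow_le_rpow_of_exponent_ge h0 h1.le (show -((n:ℝ)+1/2) ≤ -((n:ℝ)+s) by linarith)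
          linarith
      · have : 1 ≤ ‖x - y‖ ^ ((n:ℝ) + s) := Real.one_le_rpow (not_lt.1 h1) (by linarith)
        have : 1 / ‖x - y‖ ^ ((n:ℝ) + s) ≤ 1 := by
          rw [div_le_one (by linarith)]; exact this
        linarith
    have hb : 0 ≤ (ball (0:E) 1)ᶜ.indicator (fun y => 1 / ‖y‖ ^ ((n:ℝ) + s)) y ∧
        (ball (0:E) 1)ᶜ.indicator (fun y => 1 / ‖y‖ ^ ((n:ℝ) + s)) y ≤ 1 := by
      by_cases h1 : y ∈ (ball (0:E) 1)ᶜ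
      · rw [Set.indicator_of_mem h1]
        have h1' : 1 ≤ ‖y‖ := by simpa using h1
        refine ⟨by positivity, ?_⟩
        have : 1 ≤ ‖y‖ ^ ((n:ℝ) + s) := Real.one_le_rpow h1' (by linarith)
        rw [div_le_one (by linarith)]; exact this
      · rw [Set.indicator_of_notMem h1]; norm_num
    rw [abs_le]
    constructor <;> linarith [hb.1, hb.2]
  · push Not at hy
    have hmem : y ∈ (ball (0:E) 1)ᶜ := by simp; linarith
    have hxy : ‖y‖ - ‖x‖ ≤ ‖x - y‖ := by
      have := norm_sub_norm_le y x
      rwa [norm_sub_rev] at this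
    rw [Set.indicator_of_mem hmem, one_div, one_div, ← Real.rpow_neg (norm_nonneg _),
      ← Real.rpow_neg (norm_nonneg _)]
    have hq : 0 < (1 + ‖y‖) / 4 := by positivity
    have hmv := fpa_mvt ((n:ℝ)+s) ‖x - y‖ ‖y‖ ((1 + ‖y‖) / 4) (by linarith) hq
      (by linarith) (by linarith)
    have hd : |‖x - y‖ - ‖y‖| ≤ M := by
      rw [abs_le]
      have := norm_sub_le x y
      constructor <;> linarith
    have h3 : ((1 + ‖y‖) / 4) ^ (-((n:ℝ)+s) - 1) ≤ 4 ^ ((n:ℝ)+2) * (1 + ‖y‖) ^ (-((n:ℝ) + 1)) := by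
      rw [Real.div_rpow (by positivity) (by norm_num), div_eq_mul_inv, ← Real.rpow_neg (by norm_num), mul_comm]
      refine mul_le_mul ?_ ?_ (by positivity) (by positivity)
      · exact Real.rpow_le_rpow_of_exponent_le (by norm_num) (by linarith)
      · exact Real.rpow_le_rpow_of_exponent_le (by linarith) (by linarith)
    have h4 : ((n:ℝ)+s) * ((1 + ‖y‖) / 4) ^ (-((n:ℝ)+s) - 1) * |‖x - y‖ - ‖y‖|
        ≤ ((n:ℝ)+1) * (4 ^ ((n:ℝ)+2) * (1 + ‖y‖) ^ (-((n:ℝ) + 1))) * M := by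
      gcongr
      linarith
    have h5 : ((n:ℝ)+1) * (4 ^ ((n:ℝ)+2) * (1 + ‖y‖) ^ (-((n:ℝ) + 1))) * M
      = ((n:ℝ)+1) * M * 4 ^ ((n:ℝ)+2) * (1 + ‖y‖) ^ (-((n:ℝ) + 1)) := by ring
    linarith

lemma fpa_tail_int (n : ℕ) (hn : 1 ≤ n) (s : ℝ) (hs : 0 < s) :
    Integrable ((ball (0:EuclideanSpace ℝ (Fin n)) 1)ᶜ.indicator (fun y => 1 / ‖y‖ ^ ((n:ℝ) + s)))
     ∧ ∫ y, (ball (0:EuclideanSpace ℝ (Fin n)) 1)ᶜ.indicator (fun y => 1 / ‖y‖ ^ ((n:ℝ) + s)) y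
      = n * volume.real (ball (0:EuclideanSpace ℝ (Fin n)) 1) * (1 / s) := by
  have : Nontrivial (EuclideanSpace ℝ (Fin n)) := by
    apply Module.nontrivial_of_finrank_pos (R := ℝ)
    simpa using Nat.pos_of_ne_zero (by omega)
  set f : ℝ → ℝ := (Set.Ici (1:ℝ)).indicator (fun r => 1 / r ^ ((n:ℝ)+s)) with hf
  have e : (ball (0:EuclideanSpace ℝ (Fin n)) 1)ᶜ.indicator (fun y => 1 / ‖y‖ ^ ((n:ℝ) + s))
      = fun y => f ‖y‖ := by
    ext y
    by_cases h : 1 ≤ ‖y‖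
    · rw [Set.indicator_of_mem (by simpa using h), hf, Set.indicator_of_mem (by simpa using h)]
    · rw [Set.indicator_of_notMem (by simpa using h), hf, Set.indicator_of_notMem (by simpa using h)]
  have e2 : Set.EqOn (fun y : ℝ => y ^ (n - 1) • f y) ((Set.Ici (1:ℝ)).indicator (fun r => r ^ (-1 - s))) (Set.Ioi 0) := by
    intro r hr
    have hr : 0 < r := hr
    by_cases h : 1 ≤ r
    · have hmem : r ∈ Set.Ici (1:ℝ) := h
      simp only [hf, Set.indicator_of_mem hmem, smul_eq_mul]
      rw [one_div, ← Real.rpow_neg hr.le, ← Real.rpow_natCast, ← Real.rpow_add hr]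
      congr 1
      push_cast [hn]
      ring
    · have hmem : r ∉ Set.Ici (1:ℝ) := h
      simp only [hf, Set.indicator_of_notMem hmem, smul_zero]
  rw [e]
  constructor
  · rw [integrable_fun_norm_addHaar volume (f := f), finrank_euclideanSpace_fin,
      integrableOn_congr_fun e2 measurableSet_Ioi]
    refine IntegrableOn.integrable_indicator ?_ measurableSet_Ici |>.integrableOn
    rw [integrableOn_Ici_iff_integrableOn_Ioi]
    exact integrableOn_Ioi_rpow_of_lt (by linarith) one_pos
  · rw [integral_fun_norm_addHaar, finrank_euclideanSpace_fin, setIntegral_congr_fun measurableSet_Ioi e2,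
      integral_indicator measurableSet_Ici, Measure.restrict_restrict measurableSet_Ici,
      show Set.Ici (1:ℝ) ∩ Set.Ioi 0 = Set.Ici 1 from Set.inter_eq_left.2 (Set.Ici_subset_Ioi.2 one_pos), integral_Ici_eq_integral_Ioi,
      integral_Ioi_rpow_of_lt (by linarith) one_pos]
    have h1 : -1 - s + 1 = -s := by ring
    rw [h1, Real.one_rpow, neg_div_neg_eq, nsmul_eq_mul, smul_eq_mul, mul_assoc]

lemma fpa_prod (n : ℕ) (hn : 1 ≤ n) (Ω : Set (EuclideanSpace ℝ (Fin n)))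
    (hΩo : IsOpen Ω) (P : ℝ) (hP0 : 0 ≤ P)
    (hP : ∀ h : EuclideanSpace ℝ (Fin n), 
      volume {x | x ∈ Ω ∧ x + h ∉ Ω} ≤ ENNReal.ofReal (P * ‖h‖)) :
    Integrable (fun z : EuclideanSpace ℝ (Fin n) × EuclideanSpace ℝ (Fin n) =>
      Ωᶜ.indicator (fun _ => (1:ℝ)) z.2 *
      (ball (0:EuclideanSpace ℝ (Fin n)) 1).indicator (fun h => ‖h‖ ^ (-((n:ℝ) + 1/2))) (z.1 - z.2))
      ((volume.restrict Ω).prod volume) := by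
  set κ : EuclideanSpace ℝ (Fin n) → ℝ :=
    (ball (0:EuclideanSpace ℝ (Fin n)) 1).indicator (fun h => ‖h‖ ^ (-((n:ℝ) + 1/2))) with hκ
  have hκm : Measurable κ := by
    refine Measurable.indicator ?_ measurableSet_ball
    fun_prop
  have hκ0 : ∀ h, 0 ≤ κ h := fun h => Set.indicator_nonneg (fun h _ => by positivity) _
  have hκneg : ∀ h, κ (-h) = κ h := by
    intro h
    simp [hκ, Set.indicator]
  have hχm : Measurable (Ωᶜ.indicator (fun _ => (1:ℝ))) :=
    measurable_const.indicator hΩo.measurableSet.compl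
  have hmeas : Measurable (fun z : EuclideanSpace ℝ (Fin n) × EuclideanSpace ℝ (Fin n) =>
      Ωᶜ.indicator (fun _ => (1:ℝ)) z.2 * κ (z.1 - z.2)) :=
    (hχm.comp measurable_snd).mul (hκm.comp (measurable_fst.sub measurable_snd))
  refine ⟨hmeas.aestronglyMeasurable, ?_⟩
  unfold HasFiniteIntegral
  rw [lintegral_prod _ hmeas.enorm.aemeasurable]
  have hloc : IntegrableOn (fun h : EuclideanSpace ℝ (Fin n) => P * ‖h‖ ^ (-((n:ℝ) - 1/2))) (ball 0 1) := by
    refine integrableOn_ball_of_norm_le_rpow (C := P) (α := (n:ℝ) - 1/2) (by simpa using hn) (by simp) ?_ ?_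
    · refine Filter.Eventually.of_forall fun x => ?_
      rw [Real.norm_eq_abs, abs_of_nonneg (by positivity)]
    · exact (by fun_prop : Measurable fun h : EuclideanSpace ℝ (Fin n) => P * ‖h‖ ^ (-((n:ℝ) - 1/2))).aestronglyMeasurable
  calc ∫⁻ x in Ω, ∫⁻ y, ‖Ωᶜ.indicator (fun _ => (1:ℝ)) y * κ (x - y)‖ₑ
      = ∫⁻ x in Ω, ∫⁻ h, ‖Ωᶜ.indicator (fun _ => (1:ℝ)) (x + h) * κ h‖ₑ := by
        refine lintegral_congr fun x => ?_
        rw [← lintegral_add_left_eq_self _ x]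
        refine lintegral_congr fun h => ?_
        rw [sub_add_cancel_left, hκneg]
    _ = ∫⁻ h, ∫⁻ x in Ω, ‖Ωᶜ.indicator (fun _ => (1:ℝ)) (x + h) * κ h‖ₑ := by
        refine lintegral_lintegral_swap ?_
        exact ((hχm.comp (measurable_fst.add measurable_snd)).mul (hκm.comp measurable_snd)).enorm.aemeasurable
    _ ≤ ∫⁻ h, (ball (0:EuclideanSpace ℝ (Fin n)) 1).indicator (fun h => ENNReal.ofReal (P * ‖h‖ ^ (-((n:ℝ) - 1/2)))) h := by
        refine lintegral_mono fun h => ?_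
        by_cases hh : h ∈ ball (0:EuclideanSpace ℝ (Fin n)) 1
        · rw [Set.indicator_of_mem hh]
          have hAm : MeasurableSet {x | x ∈ Ω ∧ x + h ∉ Ω} := by
            refine hΩo.measurableSet.inter ?_
            exact (hΩo.measurableSet.preimage (measurable_add_const h)).compl
          calc ∫⁻ x in Ω, ‖Ωᶜ.indicator (fun _ => (1:ℝ)) (x + h) * κ h‖ₑ
              = ∫⁻ x, {x | x ∈ Ω ∧ x + h ∉ Ω}.indicator (fun _ => ENNReal.ofReal (κ h)) x := by
                rw [← lintegral_indicator hΩo.measurableSet]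
                refine lintegral_congr fun x => ?_
                by_cases h1 : x ∈ Ω
                · by_cases h2 : x + h ∈ Ω
                  · simp [Set.indicator, h1, h2]
                  · simp only [Set.indicator, h1, h2, Set.mem_compl_iff, not_false_eq_true, if_true,
                      one_mul, Set.mem_ofPred_eq, and_self]
                    rw [Real.enorm_of_nonneg (hκ0 h)]
                · simp [Set.indicator, h1]
            _ = ENNReal.ofReal (κ h) * volume {x | x ∈ Ω ∧ x + h ∉ Ω} := by
                rw [lintegral_indicator_const hAm]
            _ ≤ ENNReal.ofReal (κ h) * ENNReal.ofReal (P * ‖h‖) := by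
                gcongr
                exact hP h
            _ ≤ ENNReal.ofReal (P * ‖h‖ ^ (-((n:ℝ) - 1/2))) := by
                rw [← ENNReal.ofReal_mul (hκ0 h)]
                refine ENNReal.ofReal_le_ofReal ?_
                rw [hκ, Set.indicator_of_mem hh]
                rcases (norm_nonneg h).eq_or_lt with h0 | h0
                · rw [← h0]
                  have : 0 ≤ P * (0:ℝ) ^ (-((n:ℝ) - 1/2)) := by positivity
                  simpa using this
                · have : ‖h‖ ^ (-((n:ℝ) - 1/2)) = ‖h‖ ^ (-((n:ℝ) + 1/2)) * ‖h‖ := by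
                    rw [← Real.rpow_add_one h0.ne']
                    congr 1
                    ring
                  rw [this]
                  apply le_of_eq
                  ring
        · have : κ h = 0 := by rw [hκ, Set.indicator_of_notMem hh]
          simp [this]
    _ < ⊤ := by
        rw [lintegral_indicator measurableSet_ball]
        exact hloc.lintegral_lt_top


/-- Asymptotics of the `s`-perimeter as `s → 0⁺`: if `Ω` is a bounded open set of finite
classical perimeter and `E₀ ⊆ ℝⁿ \ Ω`, then
`limsup_{s→0⁺} s · P_s(E₀, Ω) = ᾱ(E₀) · |Ω|`. -/
theorem fracPerimeter_asymptotics (n : ℕ) (Ω E₀ : Set (EuclideanSpace ℝ (Fin n)))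
    (hΩo : IsOpen Ω) (hΩb : Bornology.IsBounded Ω) (hΩp : HasFinitePerimeter n Ω)
    (hE₀ : MeasurableSet E₀) (hE₀Ω : E₀ ⊆ Ωᶜ) :
    limsup (fun s : ℝ => s * fracPerimeterExt n E₀ Ω s) (𝓝[>] (0 : ℝ)) =
      alphaBar n E₀ * (volume Ω).toReal := by
  have hΩm := hΩo.measurableSet
  rcases Nat.eq_zero_or_pos n with rfl | hn
  · have hE : ∀ s, tailIntegral 0 E₀ s 0 1 = 0 := by
      intro s
      have : (ball (0:EuclideanSpace ℝ (Fin 0)) 1)ᶜ = ∅ := by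
        ext y
        simp [Subsingleton.elim y 0]
      simp [tailIntegral, this]
    have hF : ∀ s, fracPerimeterExt 0 E₀ Ω s = 0 := by
      intro s
      rcases Subsingleton.set_cases (p := fun S : Set (EuclideanSpace ℝ (Fin 0)) => S = ∅ ∨ S = Set.univ) (Or.inl rfl) (Or.inr rfl) Ω with h | h
      · simp [fracPerimeterExt, h]
      · have : E₀ = ∅ := by
          rw [h] at hE₀Ω
          simpa using hE₀Ω
        simp [fracPerimeterExt, this]
    simp [alphaBar, hE, hF]
  obtain ⟨P, hP⟩ := hΩp
  have hP0 : 0 ≤ P := by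
    have := hP (fun _ => 0) contDiff_const (by simpa using! HasCompactSupport.zero) (by simp)
    simpa [divergence] using this
  have hfin : IsFiniteMeasure (volume.restrict Ω) := by
    constructor
    simpa using hΩb.measure_lt_top
  have hprod := fpa_prod n hn Ω hΩo P hP0 (fpa_set n Ω hΩo hΩb P hP)
  obtain ⟨M, hM0, hM⟩ := hΩb.exists_pos_norm_le
  obtain ⟨C, hC0, hC⟩ := fpa_pt (E := EuclideanSpace ℝ (Fin n)) n M hM0.le
  set χ : EuclideanSpace ℝ (Fin n) → ℝ := E₀.indicator (fun _ => (1:ℝ)) with hχ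
  have hχm : Measurable χ := measurable_const.indicator hE₀
  set g : ℝ → EuclideanSpace ℝ (Fin n) → ℝ := fun s => (ball (0:EuclideanSpace ℝ (Fin n)) 1)ᶜ.indicator (fun y => 1 / ‖y‖ ^ ((n:ℝ) + s)) with hg
  have hgm : ∀ s, Measurable (g s) := fun s => by
    refine Measurable.indicator ?_ measurableSet_ball.compl
    fun_prop
  have hg0 : ∀ s y, 0 ≤ g s y := fun s y => Set.indicator_nonneg (fun y _ => by positivity) _
  have hχ01 : ∀ y, 0 ≤ χ y ∧ χ y ≤ 1 := by
    intro y
    by_cases h : y ∈ E₀ <;> simp [hχ, h]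
  have hχg : ∀ s, 0 < s → Integrable (fun y => χ y * g s y) := by
    intro s hs
    refine (fpa_tail_int n hn s hs).1.mono' (hχm.mul (hgm s)).aestronglyMeasurable ?_
    refine Filter.Eventually.of_forall fun y => ?_
    rw [Real.norm_eq_abs, abs_of_nonneg (mul_nonneg (hχ01 y).1 (hg0 s y))]
    exact mul_le_of_le_one_left (hg0 s y) (hχ01 y).2
  have htail : ∀ s, tailIntegral n E₀ s 0 1 = ∫ y, χ y * g s y := by
    intro s
    unfold tailIntegral
    rw [← integral_indicator measurableSet_ball.compl]
    refine integral_congr_ae (Filter.Eventually.of_forall fun y => ?_)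
    by_cases h : y ∈ (ball (0:EuclideanSpace ℝ (Fin n)) 1)ᶜ
    · simp only [hg, Set.indicator_of_mem h, zero_sub, norm_neg]
      rw [mul_one_div]
    · simp only [hg, Set.indicator_of_notMem h, mul_zero]
  have hper : ∀ s, fracPerimeterExt n E₀ Ω s = ∫ x in Ω, ∫ y, χ y * (1 / ‖x - y‖ ^ ((n:ℝ) + s)) := by
    intro s
    unfold fracPerimeterExt
    congr 1
    ext x
    rw [← integral_indicator hE₀]
    refine integral_congr_ae (Filter.Eventually.of_forall fun y => ?_)
    by_cases h : y ∈ E₀ <;> simp [hχ, h]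
  set κ : EuclideanSpace ℝ (Fin n) → ℝ := (ball (0:EuclideanSpace ℝ (Fin n)) 1).indicator (fun h => ‖h‖ ^ (-((n:ℝ) + 1/2))) with hκ
  have hκ0 : ∀ h, 0 ≤ κ h := fun h => Set.indicator_nonneg (fun h _ => by positivity) _
  set H : EuclideanSpace ℝ (Fin n) × EuclideanSpace ℝ (Fin n) → ℝ := fun z => Ωᶜ.indicator (fun _ => (1:ℝ)) z.2 * κ (z.1 - z.2)
    + C * (1 + ‖z.2‖) ^ (-((n:ℝ) + 1)) with hH
  have hHint : Integrable H ((volume.restrict Ω).prod volume) := by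
    refine hprod.add ?_
    have h1 : Integrable (fun y : EuclideanSpace ℝ (Fin n) => C * (1 + ‖y‖) ^ (-((n:ℝ) + 1))) :=
      (integrable_one_add_norm (by simp)).const_mul C
    exact h1.comp_snd (volume.restrict Ω)
  have hbound : ∀ s ∈ Set.Ioo (0:ℝ) (1/2), ∀ᵐ z ∂((volume.restrict Ω).prod (volume : Measure (EuclideanSpace ℝ (Fin n)))),
      ‖χ z.2 * (1 / ‖z.1 - z.2‖ ^ ((n:ℝ) + s)) - χ z.2 * g s z.2‖ ≤ H z := by
    intro s hs
    have hae : ∀ᵐ z ∂((volume.restrict Ω).prod (volume : Measure (EuclideanSpace ℝ (Fin n)))), z.1 ∈ Ω :=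
      Measure.quasiMeasurePreserving_fst.ae (ae_restrict_mem hΩm)
    filter_upwards [hae] with z hz
    have h1 := hC s hs z.1 z.2 (hM _ hz)
    by_cases h : z.2 ∈ E₀
    · have h2 : z.2 ∈ Ωᶜ := hE₀Ω h
      simp only [hH, hχ, Set.indicator_of_mem h, Set.indicator_of_mem h2, one_mul]
      exact h1
    · simp only [hH, hχ, Set.indicator_of_notMem h, zero_mul, sub_zero, norm_zero]
      have : 0 ≤ Ωᶜ.indicator (fun _ => (1:ℝ)) z.2 := Set.indicator_nonneg (fun _ _ => zero_le_one) _
      have := hκ0 (z.1 - z.2)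
      positivity
  have hdint : ∀ s ∈ Set.Ioo (0:ℝ) (1/2), Integrable (fun z : EuclideanSpace ℝ (Fin n) × EuclideanSpace ℝ (Fin n) =>
      χ z.2 * (1 / ‖z.1 - z.2‖ ^ ((n:ℝ) + s)) - χ z.2 * g s z.2) ((volume.restrict Ω).prod volume) := by
    intro s hs
    refine hHint.mono' ?_ (hbound s hs)
    have := hgm s
    exact (by fun_prop : Measurable (fun z : EuclideanSpace ℝ (Fin n) × EuclideanSpace ℝ (Fin n) =>
      χ z.2 * (1 / ‖z.1 - z.2‖ ^ ((n:ℝ) + s)) - χ z.2 * g s z.2)).aestronglyMeasurable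
  have hgint : ∀ s, 0 < s → Integrable (fun z : EuclideanSpace ℝ (Fin n) × EuclideanSpace ℝ (Fin n) => χ z.2 * g s z.2)
      ((volume.restrict Ω).prod volume) := fun s hs => (hχg s hs).comp_snd (volume.restrict Ω)
  refine fpa_limsup (fun s => tailIntegral n E₀ s 0 1) (fun s => fracPerimeterExt n E₀ Ω s)
    (volume Ω).toReal (n * volume.real (ball (0:EuclideanSpace ℝ (Fin n)) 1))
    (∫ z, H z ∂((volume.restrict Ω).prod volume)) ENNReal.toReal_nonneg ?_ ?_ ?_
  · intro s hs
    refine mul_nonneg hs.1.le ?_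
    simp only [htail]
    exact integral_nonneg fun y => mul_nonneg (hχ01 y).1 (hg0 s y)
  · intro s hs
    have h1 := fpa_tail_int n hn s hs.1
    have h2 : tailIntegral n E₀ s 0 1 ≤ n * volume.real (ball (0:EuclideanSpace ℝ (Fin n)) 1) * (1 / s) := by
      rw [← h1.2, htail]
      exact integral_mono (hχg s hs.1) h1.1 fun y => mul_le_of_le_one_left (hg0 s y) (hχ01 y).2
    calc s * tailIntegral n E₀ s 0 1 ≤ s * (n * volume.real (ball (0:EuclideanSpace ℝ (Fin n)) 1) * (1 / s)) :=
          mul_le_mul_of_nonneg_left h2 hs.1.le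
      _ = _ := by
          have := hs.1.ne'
          field_simp
  · intro s hs
    have hd := hdint s hs
    have hgi := hgint s hs.1
    have hf : Integrable (fun z : EuclideanSpace ℝ (Fin n) × EuclideanSpace ℝ (Fin n) => χ z.2 * (1 / ‖z.1 - z.2‖ ^ ((n:ℝ) + s)))
        ((volume.restrict Ω).prod volume) := by
      have := hd.add hgi
      refine this.congr (Filter.Eventually.of_forall fun z => ?_)
      simp
    have e1 : fracPerimeterExt n E₀ Ω s = ∫ z : EuclideanSpace ℝ (Fin n) × EuclideanSpace ℝ (Fin n), χ z.2 * (1 / ‖z.1 - z.2‖ ^ ((n:ℝ) + s))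
        ∂((volume.restrict Ω).prod volume) := by
      rw [hper, integral_prod _ hf]
    have e2 : tailIntegral n E₀ s 0 1 * (volume Ω).toReal = ∫ z : EuclideanSpace ℝ (Fin n) × EuclideanSpace ℝ (Fin n), χ z.2 * g s z.2
        ∂((volume.restrict Ω).prod volume) := by
      rw [htail, integral_prod _ hgi]
      simp [mul_comm, Measure.real]
    simp only [e1, e2]
    rw [← integral_sub hf hgi, ← Real.norm_eq_abs]
    exact norm_integral_le_of_norm_le hHint (hbound s hs)
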